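/- Let F be a field of characteristic p > 0 (p prime). The universal enveloping algebra U(sl₂(F)) is integral over its center: every element of U(sl₂(F)) is a root of a monic polynomial with coefficients in the center of U(sl₂(F)). -/

import Mathlib

open LieAlgebra.SpecialLinear

noncomputable section

/-! Jacobson's argument. If `T` is integral over a ring of characteristic `p`, then some monic
`p`-polynomial `X ^ p ^ n + ∑ cᵢ X ^ p ^ i` kills `T`. In an associative algebra `ad` commutes with
`p`-th powers, hence `ad (P a) = P (ad a)` for every `p`-polynomial `P`. Choosing `P` with
`P (ad x) = 0` on `L` therefore makes `P (ι x)` central, so that `ι x` is integral over the center.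
Reordering a word in the generators changes it by shorter words, so `U(L)` is spanned over its
center by ordered words; integrality bounds their exponents and `U(L)` is a finite module over its
center. -/

theorem exists_mem_span_image_Iio {R M : Type*} [Semiring R] [AddCommMonoid M] [Module R M]
    [IsNoetherian R M] (f : ℕ → M) : ∃ n, f n ∈ Submodule.span R (f '' Set.Iio n) := by
  let S : ℕ →o Submodule R M :=
    ⟨fun n => Submodule.span R (f '' Set.Iio n), fun _ _ h =>
      Submodule.span_mono (Set.image_mono (Set.Iio_subset_Iio h))⟩
  obtain ⟨n, hn⟩ := monotone_stabilizes_iff_noetherian.mpr ‹_› S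
  have hmem : f n ∈ S (n + 1) := Submodule.subset_span ⟨n, n.lt_succ_self, rfl⟩
  rw [← hn (n + 1) n.le_succ] at hmem
  exact ⟨n, hmem⟩

theorem aeval_apply_of_semiconj {R M N : Type*} [CommSemiring R] [AddCommMonoid M] [Module R M]
    [AddCommMonoid N] [Module R N] (f : M →ₗ[R] N) {S : Module.End R M} {T : Module.End R N}
    (h : ∀ m, T (f m) = f (S m)) (P : Polynomial R) (m : M) :
    Polynomial.aeval T P (f m) = f (Polynomial.aeval S P m) := by
  induction P using Polynomial.induction_on' with
  | add P Q hP hQ => simp [hP, hQ]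
  | monomial n r =>
    have hpow : (T ^ n) (f m) = f ((S ^ n) m) := by
      simpa [Module.End.coe_pow] using
        (Function.Semiconj.iterate_right (f := f) (fun m => (h m).symm) n m).symm
    simp [Polynomial.aeval_monomial, hpow]

section PPolynomial

open Polynomial

/-- The `p`-polynomials over `R` in the sense of Ore and Jacobson, that is the linear combinations
of the monomials `X ^ p ^ i`, as a submodule of `R[X]`. -/
def pPolynomials (R : Type*) [CommRing R] (p : ℕ) : Submodule R R[X] :=
  Submodule.span R (Set.range fun i : ℕ => X ^ p ^ i)

variable {R : Type*} [CommRing R] {p : ℕ}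

theorem X_pow_mem_pPolynomials (i : ℕ) : X ^ p ^ i ∈ pPolynomials R p :=
  Submodule.subset_span ⟨i, rfl⟩

theorem map_mem_pPolynomials {S : Type*} [CommRing S] (φ : R →+* S) {P : R[X]}
    (hP : P ∈ pPolynomials R p) : P.map φ ∈ pPolynomials S p := by
  induction hP using Submodule.span_induction with
  | mem _ h =>
    obtain ⟨i, rfl⟩ := h
    simpa using X_pow_mem_pPolynomials i
  | zero => simp
  | add P Q _ _ hP hQ => simpa using add_mem hP hQ
  | smul r P _ hP => simpa [Polynomial.map_smul] using Submodule.smul_mem _ (φ r) hP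

theorem coeff_zero_of_mem_pPolynomials (hp : p ≠ 0) {P : R[X]} (hP : P ∈ pPolynomials R p) :
    P.coeff 0 = 0 := by
  suffices pPolynomials R p ≤ LinearMap.ker (lcoeff R 0) from this hP
  rw [pPolynomials, Submodule.span_le]
  rintro _ ⟨i, rfl⟩
  simp [coeff_X_pow, (pow_ne_zero i hp).symm]

theorem natDegree_ne_zero_of_mem_pPolynomials [Nontrivial R] (hp : p ≠ 0) {P : R[X]}
    (hP : P ∈ pPolynomials R p) (hmonic : P.Monic) : P.natDegree ≠ 0 := by
  intro hdeg
  simpa [hmonic.natDegree_eq_zero.mp hdeg] using coeff_zero_of_mem_pPolynomials hp hP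

variable {A : Type*} [Ring A] [Algebra R A]

theorem exists_monic_mem_pPolynomials_of_isNoetherian [IsNoetherian R A] (hp : 1 < p) (a : A) :
    ∃ P ∈ pPolynomials R p, P.Monic ∧ aeval a P = 0 := by
  obtain ⟨n, hn⟩ := exists_mem_span_image_Iio (R := R) fun i => a ^ p ^ i
  have himage : (fun i => a ^ p ^ i) '' Set.Iio n =
      (aeval a).toLinearMap '' ((fun i => (X : R[X]) ^ p ^ i) '' Set.Iio n) := by
    simp [Set.image_image]
  rw [himage, ← Submodule.map_span] at hn
  obtain ⟨Q, hQ, hQa⟩ := hn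
  have hdeg : Q.degree < (p ^ n : ℕ) := by
    rw [← mem_degreeLT]
    refine Submodule.span_le.mpr ?_ hQ
    rintro _ ⟨i, hi, rfl⟩
    have hlt : p ^ i < p ^ n := Nat.pow_lt_pow_right hp hi
    exact mem_degreeLT.mpr ((degree_X_pow_le _).trans_lt (by exact_mod_cast hlt))
  refine ⟨X ^ p ^ n - Q, sub_mem (X_pow_mem_pPolynomials n) ?_, monic_X_pow_sub hdeg, ?_⟩
  · exact Submodule.span_mono (Set.image_subset_range _ _) hQ
  · simpa [sub_eq_zero] using hQa.symm

theorem exists_monic_mem_pPolynomials_of_isIntegral (hp : 1 < p) {a : A} (ha : IsIntegral R a) :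
    ∃ P ∈ pPolynomials R p, P.Monic ∧ aeval a P = 0 := by
  obtain ⟨P, hP, hPa⟩ := ha
  -- Descend to the subring generated by the coefficients of `P`, which is Noetherian.
  let R₀ := Subring.closure (P.coeffs : Set R)
  have : IsNoetherianRing R₀ := is_noetherian_subring_closure _ P.coeffs.finite_toSet
  have ha₀ : IsIntegral R₀ a :=
    ⟨P.toSubring R₀ Subring.subset_closure, (monic_toSubring ..).mpr hP, by
      rwa [← map_toSubring P R₀ Subring.subset_closure, eval₂_map] at hPa⟩
  let B := Algebra.adjoin R₀ {a}
  have : IsNoetherian R₀ B := isNoetherian_of_fg_of_noetherian _ ha₀.fg_adjoin_singleton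
  obtain ⟨Q, hQ, hmonic, hroot⟩ := exists_monic_mem_pPolynomials_of_isNoetherian (R := R₀) hp
    (⟨a, Algebra.self_mem_adjoin_singleton R₀ a⟩ : B)
  refine ⟨Q.map R₀.subtype, map_mem_pPolynomials _ hQ, hmonic.map _, ?_⟩
  calc aeval a (Q.map R₀.subtype) = aeval a Q := aeval_map_algebraMap R a Q
    _ = 0 := by simpa [← aeval_algHom_apply] using congrArg B.val hroot

attribute [local instance] LieRing.ofAssociativeRing

variable [CharP R p]

theorem ad_pow_char_pow [Fact p.Prime] (a : A) (n : ℕ) :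
    LieAlgebra.ad R A (a ^ p ^ n) = LieAlgebra.ad R A a ^ p ^ n := by
  nontriviality A
  have : CharP (Module.End R A) p :=
    (CharP.charP_iff_prime_eq_zero Fact.out).mpr <| by
      rw [← map_natCast (algebraMap R _), CharP.cast_eq_zero, map_zero]
  simp only [LieAlgebra.ad_eq_lmul_left_sub_lmul_right, Pi.sub_apply,
    sub_pow_char_pow_of_commute _ _ (LinearMap.commute_mulLeft_right (R := R) a a),
    LinearMap.pow_mulLeft, LinearMap.pow_mulRight]

theorem ad_aeval_of_mem_pPolynomials [Fact p.Prime] {P : R[X]} (hP : P ∈ pPolynomials R p)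
    (a : A) : LieAlgebra.ad R A (aeval a P) = aeval (LieAlgebra.ad R A a) P := by
  induction hP using Submodule.span_induction with
  | mem _ h =>
    obtain ⟨i, rfl⟩ := h
    simp [ad_pow_char_pow]
  | zero => simp
  | add P Q _ _ hP hQ => simp [hP, hQ]
  | smul r P _ hP => simp [hP]

end PPolynomial

section ListProd

variable {K A I : Type*} [CommSemiring K] [Semiring A] [Algebra K A]

theorem list_prod_map_mem_list_prod_map (s : List I) {f : I → A} {S : I → Submodule K A}
    (h : ∀ i, f i ∈ S i) : (s.map f).prod ∈ (s.map S).prod := by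
  induction s with
  | nil => simpa using Submodule.one_le.mp (le_refl (1 : Submodule K A))
  | cons i s ih => simpa using Submodule.mul_mem_mul (h i) ih

theorem fg_list_prod {s : List (Submodule K A)} (hs : ∀ S ∈ s, S.FG) : s.prod.FG := by
  refine List.prod_induction Submodule.FG (fun _ _ => Submodule.FG.mul) ?_ hs
  exact Submodule.one_eq_span (R := K) (A := A) ▸ Submodule.fg_span_singleton 1

end ListProd

section Words

variable {K A I : Type*} [CommRing K] [Ring A] [Algebra K A]

/-- The `K`-span of the words of length less than `k` in the elements `x i`. This is the standard
filtration of the algebra generated by the `x i`, shifted by one so that reordering a word of length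
`k` produces an error in step `k`. -/
def wordSpan (K : Type*) [CommRing K] [Algebra K A] (x : I → A) (k : ℕ) : Submodule K A :=
  Submodule.span K ((fun l : List I => (l.map x).prod) '' {l | l.length < k})

variable {x : I → A} {k : ℕ}

theorem prod_mem_wordSpan {l : List I} (hl : l.length < k) : (l.map x).prod ∈ wordSpan K x k :=
  Submodule.subset_span ⟨l, hl, rfl⟩

theorem wordSpan_mono {m : ℕ} (h : m ≤ k) : wordSpan K x m ≤ wordSpan K x k :=
  Submodule.span_mono (Set.image_mono fun _ hl => lt_of_lt_of_le hl h)

theorem mul_mem_wordSpan_succ (i : I) {a : A} (ha : a ∈ wordSpan K x k) :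
    x i * a ∈ wordSpan K x (k + 1) := by
  suffices wordSpan K x k ≤ (wordSpan K x (k + 1)).comap (LinearMap.mulLeft K (x i)) from this ha
  rw [wordSpan, Submodule.span_le]
  rintro _ ⟨l, hl, rfl⟩
  exact prod_mem_wordSpan (l := i :: l) (Nat.succ_lt_succ hl)

theorem mul_prod_mem_wordSpan {v : A} (hv : v ∈ Submodule.span K (Set.range x)) (l : List I) :
    v * (l.map x).prod ∈ wordSpan K x (l.length + 2) := by
  suffices Submodule.span K (Set.range x) ≤
    (wordSpan K x (l.length + 2)).comap (LinearMap.mulRight K (l.map x).prod) from this hv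
  rw [Submodule.span_le]
  rintro _ ⟨i, rfl⟩
  exact prod_mem_wordSpan (l := i :: l) (Nat.lt_succ_self _)

theorem prod_sub_prod_mem_wordSpan_of_perm
    (hx : ∀ i j, x i * x j - x j * x i ∈ Submodule.span K (Set.range x))
    {l₁ l₂ : List I} (h : l₁.Perm l₂) :
    (l₁.map x).prod - (l₂.map x).prod ∈ wordSpan K x l₁.length := by
  induction h with
  | nil => simp
  | cons i _ ih => simpa [mul_sub] using mul_mem_wordSpan_succ i ih
  | swap i j l => simpa [sub_mul, mul_assoc] using mul_prod_mem_wordSpan (hx j i) l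
  | trans h₁ _ ih₁ ih₂ =>
    rw [← h₁.length_eq] at ih₂
    simpa only [sub_add_sub_cancel] using add_mem ih₁ ih₂

theorem adjoin_range_le_of_forall_wordSpan_le {N : Submodule K A}
    (hN : ∀ k, wordSpan K x k ≤ N) :
    Subalgebra.toSubmodule (Algebra.adjoin K (Set.range x)) ≤ N := by
  rw [Algebra.adjoin_eq_span, ← FreeMonoid.mrange_lift, Submodule.span_le]
  rintro _ ⟨l, rfl⟩
  rw [FreeMonoid.lift_apply]
  exact hN _ (prod_mem_wordSpan (Nat.lt_succ_self _))

theorem perm_flatMap_replicate_count [Fintype I] [DecidableEq I] (l : List I) :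
    l.Perm (Finset.univ.toList.flatMap fun i => List.replicate (l.count i) i) := by
  rw [List.perm_iff_count]
  intro a
  rw [List.count_flatMap, Finset.sum_map_toList]
  simp [List.count_replicate]

theorem wordSpan_le_of_forall_prod_pow_mem [Fintype I]
    (hx : ∀ i j, x i * x j - x j * x i ∈ Submodule.span K (Set.range x)) {N : Submodule K A}
    (hN : ∀ c : I → ℕ, (Finset.univ.toList.map fun i => x i ^ c i).prod ∈ N) (k : ℕ) :
    wordSpan K x k ≤ N := by
  classical
  induction k with
  | zero => simp [wordSpan]
  | succ k ih =>
    rw [wordSpan, Submodule.span_le]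
    rintro _ ⟨l, hl, rfl⟩
    have hperm := perm_flatMap_replicate_count l
    have herror := ih (wordSpan_mono (Nat.le_of_lt_succ hl)
      (prod_sub_prod_mem_wordSpan_of_perm hx hperm))
    have hordered := hN fun i => l.count i
    simpa [List.flatMap_def, List.map_flatten, List.prod_flatten, Function.comp_def]
      using add_mem herror hordered

theorem moduleFinite_of_isIntegral_of_commutator_mem_span [Finite I]
    (hgen : Algebra.adjoin K (Set.range x) = ⊤)
    (hx : ∀ i j, x i * x j - x j * x i ∈ Submodule.span K (Set.range x))
    (hintegral : ∀ i, IsIntegral K (x i)) : Module.Finite K A := by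
  have := Fintype.ofFinite I
  let N : Submodule K A :=
    (Finset.univ.toList.map fun i => Subalgebra.toSubmodule (Algebra.adjoin K {x i})).prod
  have hfg : N.FG := fg_list_prod <| by
    simpa using fun i => (hintegral i).fg_adjoin_singleton
  have hpow (c : I → ℕ) : (Finset.univ.toList.map fun i => x i ^ c i).prod ∈ N :=
    list_prod_map_mem_list_prod_map _ fun i =>
      pow_mem (Algebra.self_mem_adjoin_singleton K (x i)) (c i)
  have htop : N = ⊤ := by
    rw [eq_top_iff, ← Algebra.top_toSubmodule, ← hgen]
    exact adjoin_range_le_of_forall_wordSpan_le (wordSpan_le_of_forall_prod_pow_mem hx hpow)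
  exact ⟨htop ▸ hfg⟩

end Words

section EnvelopingAlgebra

open Polynomial UniversalEnvelopingAlgebra

attribute [local instance] LieRing.ofAssociativeRing

variable {R A : Type*} [CommRing R] [Ring A] [Algebra R A]

/-- The base ring acts on the center. This is Mathlib's instance for `Subalgebra.center R A`, moved
to `Subring.center A`, the center over which Mathlib makes `A` an algebra. -/
local instance instAlgebraSubringCenter : Algebra R (Subring.center A) :=
  inferInstanceAs (Algebra R (Subalgebra.center R A))

local instance instIsScalarTowerSubringCenter : IsScalarTower R (Subring.center A) A :=
  .of_algebraMap_eq fun _ => rfl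

theorem isIntegral_center_of_aeval_mem {P : R[X]} (hP : P.Monic) (hdeg : P.natDegree ≠ 0) {a : A}
    (ha : aeval a P ∈ Subring.center A) : IsIntegral (Subring.center A) a := by
  nontriviality A
  let Z := Subring.center A
  refine ⟨P.map (algebraMap R Z) - C ⟨aeval a P, ha⟩, (hP.map _).sub_of_left ?_, ?_⟩
  · refine degree_C_le.trans_lt ?_
    rw [← natDegree_pos_iff_degree_pos, hP.natDegree_map]
    exact Nat.pos_of_ne_zero hdeg
  · rw [← aeval_def, map_sub, aeval_map_algebraMap, aeval_C]
    exact sub_self _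

theorem mem_center_of_adjoin_eq_top {s : Set A} (hs : Algebra.adjoin R s = ⊤) {z : A}
    (hz : ∀ a ∈ s, Commute z a) : z ∈ Subring.center A := by
  have hle : Algebra.adjoin R s ≤ Subalgebra.centralizer R {z} :=
    Algebra.adjoin_le fun a ha => by
      rintro _ rfl
      exact hz a ha
  refine Subring.mem_center_iff.mpr fun a => ?_
  have ha : a ∈ Subalgebra.centralizer R {z} := hle (hs ▸ Algebra.mem_top)
  exact (ha z rfl).symm

variable (R) (L : Type*) [LieRing L] [LieAlgebra R L]

theorem adjoin_range_universalEnvelopingAlgebra_ι :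
    Algebra.adjoin R (Set.range (ι R : L → UniversalEnvelopingAlgebra R L)) = ⊤ := by
  have hsurj : Function.Surjective (mkAlgHom R L) := RingCon.mkₐ_surjective _
  have hrange : Set.range (ι R : L → UniversalEnvelopingAlgebra R L) =
      mkAlgHom R L '' Set.range (TensorAlgebra.ι R) :=
    Set.range_comp (mkAlgHom R L) (TensorAlgebra.ι R)
  rw [hrange, ← AlgHom.map_adjoin, TensorAlgebra.adjoin_range_ι, Algebra.map_top,
    AlgHom.range_eq_top]
  exact hsurj

variable {R L}

theorem isIntegral_center_ι [Module.Finite R L] {p : ℕ} [Fact p.Prime] [CharP R p] (x : L) :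
    IsIntegral (Subring.center (UniversalEnvelopingAlgebra R L)) (ι R x) := by
  have hp : p.Prime := Fact.out
  have := CharP.nontrivial_of_char_ne_one (R := R) hp.ne_one
  obtain ⟨P, hP, hmonic, hroot⟩ := exists_monic_mem_pPolynomials_of_isIntegral hp.one_lt
    (Algebra.IsIntegral.isIntegral (R := R) (LieAlgebra.ad R L x))
  refine isIntegral_center_of_aeval_mem hmonic
    (natDegree_ne_zero_of_mem_pPolynomials hp.ne_zero hP hmonic) ?_
  refine mem_center_of_adjoin_eq_top (adjoin_range_universalEnvelopingAlgebra_ι R L) ?_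
  rintro _ ⟨y, rfl⟩
  rw [commute_iff_lie_eq]
  calc LieAlgebra.ad R _ (aeval (ι R x) P) (ι R y)
    _ = aeval (LieAlgebra.ad R _ (ι R x)) P (ι R y) := by rw [ad_aeval_of_mem_pPolynomials hP]
    _ = ι R (aeval (LieAlgebra.ad R L x) P y) :=
      aeval_apply_of_semiconj (ι R : L →ₗ⁅R⁆ UniversalEnvelopingAlgebra R L).toLinearMap
        (fun m => ((ι R).map_lie x m).symm) P y
    _ = 0 := by simp [hroot]

theorem moduleFinite_center_universalEnvelopingAlgebra [Module.Finite R L] (p : ℕ) [Fact p.Prime]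
    [CharP R p] : Module.Finite (Subring.center (UniversalEnvelopingAlgebra R L))
      (UniversalEnvelopingAlgebra R L) := by
  let U := UniversalEnvelopingAlgebra R L
  let Z := Subring.center U
  obtain ⟨n, x, hspan⟩ := Module.Finite.exists_fin (R := R) (M := L)
  let y (i : Fin n) : U := ι R (x i)
  have hι (v : L) : ι R v ∈ Submodule.span Z (Set.range y) := by
    have hv : v ∈ Submodule.span R (Set.range x) := hspan ▸ Submodule.mem_top
    have := Submodule.mem_map_of_mem (f := (ι R : L →ₗ⁅R⁆ U).toLinearMap) hv
    rw [Submodule.map_span, ← Set.range_comp] at this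
    exact Submodule.span_le_restrictScalars R Z _ this
  have hgen : Algebra.adjoin Z (Set.range y) = ⊤ := by
    suffices Algebra.adjoin R (Set.range (ι R)) ≤ (Algebra.adjoin Z (Set.range y)).restrictScalars R
      from eq_top_iff.mpr fun u _ => this (adjoin_range_universalEnvelopingAlgebra_ι R L ▸ trivial)
    refine Algebra.adjoin_le ?_
    rintro _ ⟨v, rfl⟩
    exact Algebra.span_le_adjoin Z _ (hι v)
  refine moduleFinite_of_isIntegral_of_commutator_mem_span hgen (fun i j => ?_)
    fun i => isIntegral_center_ι (p := p) (x i)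
  rw [← LieRing.of_associative_ring_bracket, ← LieHom.map_lie]
  exact hι ⁅x i, x j⁆

end EnvelopingAlgebra

theorem uea_sl2_integral_over_center_general (R : Type*) [CommRing R] (p : ℕ) (hp : p.Prime)
    [CharP R p] (L : Type*) [LieRing L] [LieAlgebra R L] [Module.Finite R L] :
    ∀ u : UniversalEnvelopingAlgebra R L,
      IsIntegral (Subring.center (UniversalEnvelopingAlgebra R L)) u := by
  intro u
  have := Fact.mk hp
  have := moduleFinite_center_universalEnvelopingAlgebra (R := R) (L := L) p
  exact IsIntegral.of_finite _ u

/-- Over a field of prime characteristic `p`, the universal enveloping algebra `U(sl₂(F))`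
is integral over its center: every element is a root of a monic polynomial with coefficients
in the center. -/
theorem uea_sl2_integral_over_center (F : Type*) [Field F] (p : ℕ) (hp : p.Prime)
    [CharP F p] :
    ∀ u : UniversalEnvelopingAlgebra F (sl (Fin 2) F),
      IsIntegral
        (Subring.center (UniversalEnvelopingAlgebra F (sl (Fin 2) F))) u :=
  uea_sl2_integral_over_center_general F p hp (sl (Fin 2) F)

end
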